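/- Using the quantities of the previous context, for all 0 ≤ i ≤ m and 0 ≤ j ≤ n: M[i,j] = max(M[i-1,j-1]+1, C[i-k,j-k]+k) if L[i,j] > k; M[i,j] = C[i-k,j-k]+k if L[i,j] = k; and M[i,j] = -1 if L[i,j] < k. Consequently max A_{i,j} where A_{i,j} = {C[i-l,j-l] + l·match(i,j,l) : k ≤ l ≤ min(i,j)} equals max(M[i,j], C[i-k,j-k]) whenever min(i,j) ≥ k. -/

import Mathlib

/-! Equality of the length-`l` suffixes is inherited by shorter suffixes, so the matching lengths at
`(i, j)` are exactly `0, …, L[i, j]`, and `L` grows by one along a diagonal step that matches. Hence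
shifting `l` by one turns the maximum defining `M[i, j]`, without its term `l = k`, into
`M[i - 1, j - 1] + 1`. In `A`, the lengths `l ≤ L[i, j]` contribute `M[i, j]`, while each longer one
contributes a bare `C[i - l, j - l]`, which monotonicity of `C` bounds by `C[i - k, j - k]`. -/

variable {α : Type*} [DecidableEq α]

/-- `IsCSK k X Y L` : there is a common subsequence of `X` and `Y` of total length `L`
consisting of matching chunks each of length at least `k`, with the chunks at
non-overlapping increasing positions in both strings (0-based starting positions). -/
def IsCSK (k : ℕ) (X Y : List α) (L : ℕ) : Prop :=
  ∃ (t : ℕ) (i j l : ℕ → ℕ),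
    (∀ s < t, k ≤ l s) ∧
    (∀ s < t, i s + l s ≤ X.length) ∧
    (∀ s < t, j s + l s ≤ Y.length) ∧
    (∀ s < t, (X.drop (i s)).take (l s) = (Y.drop (j s)).take (l s)) ∧
    (∀ s, s + 1 < t → i s + l s ≤ i (s + 1) ∧ j s + l s ≤ j (s + 1)) ∧
    L = ∑ s ∈ Finset.range t, l s

/-- The length of a longest common subsequence in at least `k` length substrings. -/
noncomputable def lcsK (k : ℕ) (X Y : List α) : ℕ :=
  sSup {L | IsCSK k X Y L}

/-- `matchF X Y i j l = 1` iff the length-`l` suffixes of `X[1..i]` and `Y[1..j]` are equal. -/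
def matchF (X Y : List α) (i j l : ℕ) : ℕ :=
  if (X.take i).drop (i - l) = (Y.take j).drop (j - l) then 1 else 0

/-- `Lsuf X Y i j` : the length of the longest common suffix of `X[1..i]` and `Y[1..j]`. -/
noncomputable def Lsuf (X Y : List α) (i j : ℕ) : ℕ :=
  sSup {l | l ≤ i ∧ l ≤ j ∧ (X.take i).drop (i - l) = (Y.take j).drop (j - l)}

/-- `Mtab k X Y i j = max_{k ≤ l ≤ L[i,j]} (C[i-l, j-l] + l)` if `L[i,j] ≥ k`, else `-1`. -/
noncomputable def Mtab (k : ℕ) (X Y : List α) (i j : ℕ) : ℤ :=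
  if h : k ≤ Lsuf X Y i j then
    (Finset.Icc k (Lsuf X Y i j)).sup' (Finset.nonempty_Icc.mpr h)
      (fun l => (lcsK k (X.take (i - l)) (Y.take (j - l)) : ℤ) + l)
  else -1

section

variable {β : Type*} {k i j l : ℕ} {X Y : List β}

theorem sum_range_succ_le_of_add_le_succ {start len : ℕ → ℕ} {t : ℕ}
    (hstep : ∀ s, s + 1 < t → start s + len s ≤ start (s + 1)) {s : ℕ} (hs : s < t) :
    ∑ r ∈ Finset.range (s + 1), len r ≤ start s + len s := by
  induction s with
  | zero => simp
  | succ s ih =>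
    rw [Finset.sum_range_succ]
    have hsum := ih (by omega)
    have hdisjoint := hstep s hs
    omega

namespace IsCSK

theorem zero (k : ℕ) (X Y : List β) : IsCSK k X Y 0 :=
  ⟨0, 0, 0, 0, by simp⟩

theorem le_length_left {n : ℕ} (h : IsCSK k X Y n) : n ≤ X.length := by
  obtain ⟨t, i, j, l, -, hX, -, -, hstep, rfl⟩ := h
  cases t with
  | zero => simp
  | succ t =>
    exact (sum_range_succ_le_of_add_le_succ (fun s hs => (hstep s hs).1) t.lt_succ_self).trans
      (hX t t.lt_succ_self)

theorem of_prefix {X' Y' : List β} {n : ℕ} (hX : X' <+: X) (hY : Y' <+: Y)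
    (h : IsCSK k X' Y' n) : IsCSK k X Y n := by
  obtain ⟨U, rfl⟩ := hX
  obtain ⟨V, rfl⟩ := hY
  obtain ⟨t, i, j, l, hk, hiX, hjY, heq, hstep, hn⟩ := h
  have chunk_append (Z W : List β) {p q : ℕ} (hpq : p + q ≤ Z.length) :
      ((Z ++ W).drop p).take q = (Z.drop p).take q := by
    rw [List.drop_append_of_le_length (by omega),
      List.take_append_of_le_length (by rw [List.length_drop]; omega)]
  refine ⟨t, i, j, l, hk, fun s hs => ?_, fun s hs => ?_, fun s hs => ?_, hstep, hn⟩
  · exact (hiX s hs).trans (by simp)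
  · exact (hjY s hs).trans (by simp)
  · rw [chunk_append _ _ (hiX s hs), chunk_append _ _ (hjY s hs), heq s hs]

end IsCSK

theorem lcsK_le_of_prefix {X' Y' : List β} (hX : X' <+: X) (hY : Y' <+: Y) :
    lcsK k X' Y' ≤ lcsK k X Y :=
  csSup_le_csSup ⟨X.length, fun _ h => h.le_length_left⟩ ⟨0, .zero k X' Y'⟩
    fun _ h => h.of_prefix hX hY

theorem lcsK_take_mono {i' j' : ℕ} (hi : i ≤ i') (hj : j ≤ j') :
    lcsK k (X.take i) (Y.take j) ≤ lcsK k (X.take i') (Y.take j') :=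
  lcsK_le_of_prefix (List.take_prefix_take_left hi) (List.take_prefix_take_left hj)

/-- Equality of the length-`l` suffixes of `X[1..i]` and `Y[1..j]`, the condition that `Lsuf`
maximizes. The bounds on `l` are included because the truncated `i - l` and `j - l` do not see how
far `l` exceeds `i` and `j`. -/
def HasCommonSuffix (X Y : List β) (i j l : ℕ) : Prop :=
  l ≤ i ∧ l ≤ j ∧ (X.take i).drop (i - l) = (Y.take j).drop (j - l)

namespace HasCommonSuffix

theorem zero (X Y : List β) (i j : ℕ) : HasCommonSuffix X Y i j 0 := by
  simp [HasCommonSuffix]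

theorem mono {l' : ℕ} (hl : l' ≤ l) (h : HasCommonSuffix X Y i j l) :
    HasCommonSuffix X Y i j l' := by
  obtain ⟨hi, hj, heq⟩ := h
  refine ⟨hl.trans hi, hl.trans hj, ?_⟩
  have hdrop := congrArg (List.drop (l - l')) heq
  rwa [List.drop_drop, List.drop_drop, show i - l + (l - l') = i - l' by omega,
    show j - l + (l - l') = j - l' by omega] at hdrop

end HasCommonSuffix

theorem le_Lsuf_iff : l ≤ Lsuf X Y i j ↔ HasCommonSuffix X Y i j l := by
  have hbdd : BddAbove {l | HasCommonSuffix X Y i j l} := ⟨i, fun _ h => h.1⟩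
  have hmax : HasCommonSuffix X Y i j (Lsuf X Y i j) := Nat.sSup_mem ⟨0, .zero X Y i j⟩ hbdd
  exact ⟨fun h => hmax.mono h, fun h => le_csSup hbdd h⟩

theorem drop_take_succ (X : List β) {p : ℕ} (hp : p ≤ i) :
    (X.take (i + 1)).drop p = (X.take i).drop p ++ X[i]?.toList := by
  rw [List.take_add_one, List.drop_append]
  rcases lt_or_ge i X.length with hi | hi
  · rw [List.length_take_of_le hi.le, Nat.sub_eq_zero_of_le hp, List.drop_zero]
  · simp [List.getElem?_eq_none hi]

theorem hasCommonSuffix_succ_one_iff :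
    HasCommonSuffix X Y (i + 1) (j + 1) 1 ↔ X[i]? = Y[j]? := by
  cases hX : X[i]? <;> cases hY : Y[j]? <;> simp [HasCommonSuffix, drop_take_succ, hX, hY]

theorem hasCommonSuffix_succ_iff_of_getElem?_eq (h : X[i]? = Y[j]?) :
    HasCommonSuffix X Y (i + 1) (j + 1) (l + 1) ↔ HasCommonSuffix X Y i j l := by
  simp only [HasCommonSuffix, Nat.add_le_add_iff_right, Nat.add_sub_add_right,
    drop_take_succ _ (Nat.sub_le _ _), h, List.append_left_inj]

theorem Lsuf_succ_succ (h : 0 < Lsuf X Y (i + 1) (j + 1)) :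
    Lsuf X Y (i + 1) (j + 1) = Lsuf X Y i j + 1 := by
  have hlast : X[i]? = Y[j]? := hasCommonSuffix_succ_one_iff.1 (le_Lsuf_iff.1 h)
  refine eq_of_forall_le_iff fun l => ?_
  cases l with
  | zero => simp
  | succ l =>
    rw [le_Lsuf_iff, hasCommonSuffix_succ_iff_of_getElem?_eq hlast, Nat.add_le_add_iff_right,
      le_Lsuf_iff]

theorem Mtab_of_Lsuf_lt (h : Lsuf X Y i j < k) : Mtab k X Y i j = -1 :=
  dif_neg h.not_ge

theorem Mtab_le_iff (h : k ≤ Lsuf X Y i j) {b : ℤ} :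
    Mtab k X Y i j ≤ b ↔ ∀ l, k ≤ l → l ≤ Lsuf X Y i j →
      (lcsK k (X.take (i - l)) (Y.take (j - l)) : ℤ) + l ≤ b := by
  simp only [Mtab, dif_pos h, Finset.sup'_le_iff, Finset.mem_Icc, and_imp]

theorem le_Mtab (hkl : k ≤ l) (hl : l ≤ Lsuf X Y i j) :
    (lcsK k (X.take (i - l)) (Y.take (j - l)) : ℤ) + l ≤ Mtab k X Y i j :=
  (Mtab_le_iff (hkl.trans hl)).1 le_rfl l hkl hl

theorem Mtab_of_Lsuf_eq (h : Lsuf X Y i j = k) :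
    Mtab k X Y i j = (lcsK k (X.take (i - k)) (Y.take (j - k)) : ℤ) + k := by
  refine le_antisymm ((Mtab_le_iff h.ge).2 fun l hkl hl => ?_) (le_Mtab le_rfl h.ge)
  rw [hkl.antisymm (hl.trans_eq h)]

theorem Mtab_succ_succ_of_lt_Lsuf (h : k < Lsuf X Y (i + 1) (j + 1)) :
    Mtab k X Y (i + 1) (j + 1) = max (Mtab k X Y i j + 1)
      ((lcsK k (X.take (i + 1 - k)) (Y.take (j + 1 - k)) : ℤ) + k) := by
  have hL := Lsuf_succ_succ (k.zero_le.trans_lt h)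
  have hk : k ≤ Lsuf X Y i j := by omega
  apply le_antisymm
  · refine (Mtab_le_iff h.le).2 fun l hkl hl => ?_
    rcases hkl.eq_or_lt with rfl | hlt
    · exact le_max_right _ _
    · obtain ⟨l, rfl⟩ := Nat.exists_eq_add_one_of_ne_zero (Nat.ne_zero_of_lt hlt)
      have hshift := le_Mtab (Nat.le_of_lt_succ hlt) (show l ≤ Lsuf X Y i j by omega)
      rw [Nat.add_sub_add_right, Nat.add_sub_add_right]
      exact le_max_of_le_left (by push_cast; linarith)
  · refine max_le ?_ (le_Mtab le_rfl h.le)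
    rw [← le_sub_iff_add_le, Mtab_le_iff hk]
    intro l hkl hl
    have hshift := le_Mtab (Nat.le_add_right_of_le hkl)
      (show l + 1 ≤ Lsuf X Y (i + 1) (j + 1) by omega)
    rw [Nat.add_sub_add_right, Nat.add_sub_add_right] at hshift
    push_cast at hshift
    linarith

theorem Mtab_of_lt_Lsuf (h : k < Lsuf X Y i j) :
    Mtab k X Y i j = max (Mtab k X Y (i - 1) (j - 1) + 1)
      ((lcsK k (X.take (i - k)) (Y.take (j - k)) : ℤ) + k) := by
  obtain ⟨hi, hj, -⟩ := le_Lsuf_iff.1 h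
  obtain ⟨i, rfl⟩ := Nat.exists_eq_add_one_of_ne_zero (Nat.ne_zero_of_lt hi)
  obtain ⟨j, rfl⟩ := Nat.exists_eq_add_one_of_ne_zero (Nat.ne_zero_of_lt hj)
  exact Mtab_succ_succ_of_lt_Lsuf h

end

theorem matchF_eq_ite {X Y : List α} {i j l : ℕ} (hi : l ≤ i) (hj : l ≤ j) :
    matchF X Y i j l = if l ≤ Lsuf X Y i j then 1 else 0 := by
  simp only [matchF, le_Lsuf_iff, HasCommonSuffix, hi, hj, true_and]

theorem sup'_lcsK_add_mul_matchF {k i j : ℕ} (X Y : List α) (hki : k ≤ i) (hkj : k ≤ j) :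
    (Finset.Icc k (min i j)).sup' (Finset.nonempty_Icc.mpr (le_min hki hkj))
        (fun l => (lcsK k (X.take (i - l)) (Y.take (j - l)) : ℤ) + l * matchF X Y i j l) =
      max (Mtab k X Y i j) (lcsK k (X.take (i - k)) (Y.take (j - k)) : ℤ) := by
  refine eq_of_forall_ge_iff fun b => ?_
  simp only [Finset.sup'_le_iff, Finset.mem_Icc, le_min_iff, max_le_iff, and_imp]
  constructor
  · intro hA
    have hC : (lcsK k (X.take (i - k)) (Y.take (j - k)) : ℤ) ≤ b :=
      (le_add_of_nonneg_right (by positivity)).trans (hA k le_rfl hki hkj)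
    refine ⟨?_, hC⟩
    rcases lt_or_ge (Lsuf X Y i j) k with hL | hL
    · rw [Mtab_of_Lsuf_lt hL]
      omega
    · refine (Mtab_le_iff hL).2 fun l hkl hl => ?_
      obtain ⟨hli, hlj, -⟩ := le_Lsuf_iff.1 hl
      simpa [matchF_eq_ite hli hlj, hl] using hA l hkl hli hlj
  · rintro ⟨hM, hC⟩ l hkl hli hlj
    rw [matchF_eq_ite hli hlj]
    split_ifs with hl
    · simpa using (le_Mtab hkl hl).trans hM
    · have hmono : lcsK k (X.take (i - l)) (Y.take (j - l)) ≤
          lcsK k (X.take (i - k)) (Y.take (j - k)) :=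
        lcsK_take_mono (Nat.sub_le_sub_left hkl i) (Nat.sub_le_sub_left hkl j)
      push_cast
      omega

/-- The full case analysis for `M[i,j]`:
`M[i,j] = max(M[i-1,j-1]+1, C[i-k,j-k]+k)` if `L[i,j] > k`;
`M[i,j] = C[i-k,j-k]+k` if `L[i,j] = k`; `M[i,j] = -1` if `L[i,j] < k`.
Consequently, `max A_{i,j} = max(M[i,j], C[i-k,j-k])` whenever `min i j ≥ k`, where
`A_{i,j} = {C[i-l,j-l] + l·match(i,j,l) : k ≤ l ≤ min i j}`. -/
theorem Mtab_cases_and_maxA (k : ℕ) (hk : 1 ≤ k) (X Y : List α) :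
    ∀ i j : ℕ, ∀ (_ : i ≤ X.length) (_ : j ≤ Y.length),
      (k < Lsuf X Y i j →
        Mtab k X Y i j =
          max (Mtab k X Y (i - 1) (j - 1) + 1)
            ((lcsK k (X.take (i - k)) (Y.take (j - k)) : ℤ) + k)) ∧
      (Lsuf X Y i j = k →
        Mtab k X Y i j = (lcsK k (X.take (i - k)) (Y.take (j - k)) : ℤ) + k) ∧
      (Lsuf X Y i j < k → Mtab k X Y i j = -1) ∧
      (∀ (hki : k ≤ i) (hkj : k ≤ j),
        (Finset.Icc k (min i j)).sup' (Finset.nonempty_Icc.mpr (le_min hki hkj))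
            (fun l => (lcsK k (X.take (i - l)) (Y.take (j - l)) : ℤ) + l * matchF X Y i j l) =
          max (Mtab k X Y i j) (lcsK k (X.take (i - k)) (Y.take (j - k)) : ℤ)) := by
  intro i j _ _
  exact ⟨Mtab_of_lt_Lsuf, Mtab_of_Lsuf_eq, Mtab_of_Lsuf_lt, sup'_lcsK_add_mul_matchF X Y⟩
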